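/- Let 0 < c < 1 and let ρ = [[1,0],[0,0]] and σ = [[1,c],[c,1]] be 2×2 complex matrices. Then the quantum Rényi divergence D_α(ρ||σ) converges, as α → 0 through α ∈ (0,1), to −log(1+c), which is strictly negative and in particular different from D̃_0(ρ||σ) = 0. Hence the identity lim_{α→0} D_α(ρ||σ) = D̃_0(ρ||σ) fails when supp ρ is strictly contained in supp σ. -/

import Mathlib

/-!
The matrix `σ` has eigenvalues `1 ± c`, so `σ ^ s` is explicit and `σ ^ s ρ σ ^ s = w wᵀ` where
`w` is the first column of `σ ^ s`. Hence the trace in `D_α` is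
`(((1 + c) ^ ((1 - α) / α) + (1 - c) ^ ((1 - α) / α)) / 2) ^ α` (`renyiDiv_eq`). The larger power
dominates as `α → 0`, so the logarithm of this tends to `log (1 + c)` (`tendsto_renyiDiv`), whereas
`Π_ρ = ρ` gives `tr (Π_ρ σ) = 1`. All the functional calculus involved concerns matrices with at
most two eigenvalues, on which any function is affine (`cfc_eq_affine`).
-/

open Matrix Filter ComplexOrder

/-- Real power with the convention `0 ^ t = 0` for every `t` (powers taken on the support). -/
noncomputable def rpow0 (x t : ℝ) : ℝ := if x = 0 then 0 else Real.rpow x t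

/-- Power of a positive semi-definite (more generally, Hermitian) matrix via the functional
calculus, with the convention `0 ^ t = 0` on the kernel (i.e. powers are taken on the support).
Junk value `0` if the matrix is not Hermitian. -/
noncomputable def mpow {m : ℕ} (M : Matrix (Fin m) (Fin m) ℂ) (t : ℝ) :
    Matrix (Fin m) (Fin m) ℂ :=
  if hM : M.IsHermitian then hM.cfc (fun x => rpow0 x t) else 0

/-- The orthogonal projection onto the support of a positive semi-definite (more generally,
Hermitian) matrix, via the functional calculus. Junk value `0` if the matrix is not Hermitian. -/
noncomputable def suppProj {m : ℕ} (M : Matrix (Fin m) (Fin m) ℂ) :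
    Matrix (Fin m) (Fin m) ℂ :=
  if hM : M.IsHermitian then hM.cfc (fun x => if x = 0 then 0 else 1) else 0

/-- The support (column space) of a matrix. -/
noncomputable def msupp {m : ℕ} (M : Matrix (Fin m) (Fin m) ℂ) : Submodule ℂ (Fin m → ℂ) :=
  LinearMap.range M.mulVecLin


/-- The quantum Rényi divergence `D_α(ρ‖σ)`. -/
noncomputable def renyiDiv {n : ℕ} (ρ σ : Matrix (Fin n) (Fin n) ℂ) (α : ℝ) : ℝ :=
  (α - 1)⁻¹ * Real.log
    ((mpow (mpow σ ((1 - α) / (2 * α)) * ρ * mpow σ ((1 - α) / (2 * α))) α).trace.re)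

/-- The `0`-relative Rényi entropy `D̃₀(ρ‖σ) = - log tr(Π_ρ σ)`. -/
noncomputable def relRenyi0 {n : ℕ} (ρ σ : Matrix (Fin n) (Fin n) ℂ) : ℝ :=
  - Real.log ((suppProj ρ * σ).trace.re)

/-- If a Hermitian matrix is annihilated by `(x - a) (x - b)` and `f` agrees with the affine
function `u + v x` at `a` and `b`, then `f` of the matrix is the same affine function of it. -/
lemma cfc_eq_affine {n : ℕ} {M : Matrix (Fin n) (Fin n) ℂ} (hM : M.IsHermitian) (f : ℝ → ℝ)
    (a b u v : ℝ) (h : (M - a • 1) * (M - b • 1) = 0)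
    (ha : f a = u + v * a) (hb : f b = u + v * b) :
    hM.cfc f = u • 1 + v • M := by
  have hsp : ∀ r ∈ spectrum ℝ M, r = a ∨ r = b := by
    intro r hr
    by_contra! hne
    have hmem := spectrum.subset_polynomial_aeval M
      ((Polynomial.X - Polynomial.C a) * (Polynomial.X - Polynomial.C b)) ⟨r, hr, rfl⟩
    have h0 : (Polynomial.aeval M)
        ((Polynomial.X - Polynomial.C a) * (Polynomial.X - Polynomial.C b)) = 0 := by
      simpa [Algebra.algebraMap_eq_smul_one] using h
    rw [h0] at hmem
    simp only [Polynomial.eval_mul, Polynomial.eval_sub, Polynomial.eval_X,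
      Polynomial.eval_C] at hmem
    have hunit : IsUnit (algebraMap ℝ (Matrix (Fin n) (Fin n) ℂ) ((r - a) * (r - b)) - 0) := by
      rw [sub_zero]
      exact (isUnit_iff_ne_zero.2
        (mul_ne_zero (sub_ne_zero.2 hne.1) (sub_ne_zero.2 hne.2))).map _
    exact hmem hunit
  have hsa : IsSelfAdjoint M := hM
  rw [← hM.cfc_eq, cfc_congr (g := fun x => u + v * x)]
  · rw [cfc_const_add u (fun x => v * x) M, cfc_const_mul_id v M, Algebra.algebraMap_eq_smul_one]
  · intro r hr
    rcases hsp r hr with rfl | rfl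
    · exact ha
    · exact hb

lemma mpow_sigma {c : ℝ} (hc0 : 0 < c) (hc1 : c < 1) (t : ℝ) :
    mpow !![1, (c : ℂ); (c : ℂ), 1] t =
      !![((((1 + c) ^ t + (1 - c) ^ t) / 2 : ℝ) : ℂ), ((((1 + c) ^ t - (1 - c) ^ t) / 2 : ℝ) : ℂ);
         ((((1 + c) ^ t - (1 - c) ^ t) / 2 : ℝ) : ℂ),
         ((((1 + c) ^ t + (1 - c) ^ t) / 2 : ℝ) : ℂ)] := by
  have hH : (!![1, (c : ℂ); (c : ℂ), 1]).IsHermitian := by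
    ext i j; fin_cases i <;> fin_cases j <;> simp
  have h1 : (1 + c) ≠ 0 := by positivity
  have h2 : (1 - c) ≠ 0 := by linarith
  have hc : c ≠ 0 := hc0.ne'
  rw [mpow, dif_pos hH]
  generalize hp : (1 + c) ^ t = p
  generalize hq : (1 - c) ^ t = q
  rw [cfc_eq_affine hH _ (1 + c) (1 - c) (p - (p - q) / (2 * c) * (1 + c)) ((p - q) / (2 * c))]
  · have hcC : (c : ℂ) ≠ 0 := by exact_mod_cast hc
    ext i j
    fin_cases i <;> fin_cases j <;> simp <;> field_simp <;> ring
  · ext i j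
    fin_cases i <;> fin_cases j <;> simp [Matrix.mul_apply, Fin.sum_univ_two]
  · simp only [rpow0, if_neg h1, Real.rpow_eq_pow, hp]; ring
  · simp only [rpow0, if_neg h2, Real.rpow_eq_pow, hq]; field_simp; ring

/-- The matrix power of the real rank-one matrix `w wᵀ`, `w = (x, y)`, has trace `‖w‖ ^ (2 t)`. -/
lemma trace_mpow_rank_one (x y t : ℝ) (h : 0 < x ^ 2 + y ^ 2) :
    (mpow !![((x * x : ℝ) : ℂ), ((x * y : ℝ) : ℂ); ((x * y : ℝ) : ℂ), ((y * y : ℝ) : ℂ)]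
      t).trace.re = (x ^ 2 + y ^ 2) ^ t := by
  have hH : (!![((x * x : ℝ) : ℂ), ((x * y : ℝ) : ℂ);
      ((x * y : ℝ) : ℂ), ((y * y : ℝ) : ℂ)]).IsHermitian := by
    ext i j; fin_cases i <;> fin_cases j <;> simp
  rw [mpow, dif_pos hH, cfc_eq_affine hH _ (x ^ 2 + y ^ 2) 0 0
    ((x ^ 2 + y ^ 2) ^ t / (x ^ 2 + y ^ 2))]
  · have hk : (x ^ 2 + y ^ 2) ^ t / (x ^ 2 + y ^ 2) * (x ^ 2 + y ^ 2) = (x ^ 2 + y ^ 2) ^ t :=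
      div_mul_cancel₀ _ h.ne'
    generalize (x ^ 2 + y ^ 2) ^ t / (x ^ 2 + y ^ 2) = k at hk ⊢
    rw [← hk]
    simp [Matrix.trace, Fin.sum_univ_two]
    ring
  · ext i j
    fin_cases i <;> fin_cases j <;> simp [Matrix.mul_apply, Fin.sum_univ_two] <;> ring
  · simp only [rpow0, if_neg h.ne', Real.rpow_eq_pow]; field_simp; ring
  · simp [rpow0]

/-- Closed form of the divergence: with `s = (1 - α) / (2 α)`, the matrix `σ ^ s ρ σ ^ s` has rank
one and its nonzero eigenvalue is `((1 + c) ^ (2 s) + (1 - c) ^ (2 s)) / 2`. -/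
lemma renyiDiv_eq {c : ℝ} (hc0 : 0 < c) (hc1 : c < 1) {α : ℝ} (hα : 0 < α) :
    renyiDiv !![1, 0; 0, 0] !![1, (c : ℂ); (c : ℂ), 1] α =
      (α - 1)⁻¹ * (α * Real.log
        (((1 + c) ^ ((1 - α) / α) + (1 - c) ^ ((1 - α) / α)) / 2)) := by
  have h1 : 0 < 1 + c := by linarith
  have h2 : 0 < 1 - c := by linarith
  have e1 : ∀ z : ℝ, 0 < z → z ^ ((1 - α) / α) = (z ^ ((1 - α) / (2 * α))) ^ 2 := by
    intro z hz
    rw [← Real.rpow_natCast, ← Real.rpow_mul hz.le]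
    congr 1
    push_cast
    field_simp
  rw [renyiDiv, mpow_sigma hc0 hc1, e1 _ h1, e1 _ h2]
  have hp := Real.rpow_pos_of_pos h1 ((1 - α) / (2 * α))
  have hq := Real.rpow_pos_of_pos h2 ((1 - α) / (2 * α))
  generalize (1 + c) ^ ((1 - α) / (2 * α)) = p at *
  generalize (1 - c) ^ ((1 - α) / (2 * α)) = q at *
  have hm : !![(((p + q) / 2 : ℝ) : ℂ), (((p - q) / 2 : ℝ) : ℂ);
        (((p - q) / 2 : ℝ) : ℂ), (((p + q) / 2 : ℝ) : ℂ)] * !![1, 0; 0, 0] *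
      !![(((p + q) / 2 : ℝ) : ℂ), (((p - q) / 2 : ℝ) : ℂ);
        (((p - q) / 2 : ℝ) : ℂ), (((p + q) / 2 : ℝ) : ℂ)] =
      !![(((p + q) / 2 * ((p + q) / 2) : ℝ) : ℂ), (((p + q) / 2 * ((p - q) / 2) : ℝ) : ℂ);
        (((p + q) / 2 * ((p - q) / 2) : ℝ) : ℂ), (((p - q) / 2 * ((p - q) / 2) : ℝ) : ℂ)] := by
    ext i j
    fin_cases i <;> fin_cases j <;> simp [Matrix.mul_apply, Fin.sum_univ_two]
    ring
  have hr : ((p + q) / 2) ^ 2 + ((p - q) / 2) ^ 2 = (p ^ 2 + q ^ 2) / 2 := by ring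
  rw [hm, trace_mpow_rank_one _ _ _ (by rw [hr]; positivity), hr, Real.log_rpow (by positivity)]

lemma tendsto_renyiDiv {c : ℝ} (hc0 : 0 < c) (hc1 : c < 1) :
    Tendsto (fun α : ℝ => renyiDiv !![1, 0; 0, 0] !![1, (c : ℂ); (c : ℂ), 1] α)
      (nhdsWithin (0 : ℝ) (Set.Ioo (0 : ℝ) 1)) (nhds (- Real.log (1 + c))) := by
  have h1 : 0 < 1 + c := by linarith
  have h2 : 0 < 1 - c := by linarith
  have hlog : Tendsto (fun α : ℝ => α * Real.log
        (((1 + c) ^ ((1 - α) / α) + (1 - c) ^ ((1 - α) / α)) / 2))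
      (nhdsWithin (0 : ℝ) (Set.Ioo (0 : ℝ) 1)) (nhds (Real.log (1 + c))) := by
    have hlo : Tendsto (fun α : ℝ => (1 - α) * Real.log (1 + c) - α * Real.log 2)
        (nhdsWithin (0 : ℝ) (Set.Ioo (0 : ℝ) 1)) (nhds (Real.log (1 + c))) := by
      have : Continuous (fun α : ℝ => (1 - α) * Real.log (1 + c) - α * Real.log 2) := by
        fun_prop
      simpa using (this.tendsto 0).mono_left nhdsWithin_le_nhds
    have hhi : Tendsto (fun α : ℝ => (1 - α) * Real.log (1 + c))
        (nhdsWithin (0 : ℝ) (Set.Ioo (0 : ℝ) 1)) (nhds (Real.log (1 + c))) := by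
      have : Continuous (fun α : ℝ => (1 - α) * Real.log (1 + c)) := by fun_prop
      simpa using (this.tendsto 0).mono_left nhdsWithin_le_nhds
    -- The mean of the two powers lies between half of the larger one and the larger one.
    refine tendsto_of_tendsto_of_tendsto_of_le_of_le' hlo hhi ?_ ?_
    · filter_upwards [self_mem_nhdsWithin] with α hα
      have hα0 : 0 < α := hα.1
      have hP := Real.rpow_pos_of_pos h1 ((1 - α) / α)
      have hQ := Real.rpow_pos_of_pos h2 ((1 - α) / α)
      have hle : Real.log ((1 + c) ^ ((1 - α) / α) / 2) ≤ Real.log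
          (((1 + c) ^ ((1 - α) / α) + (1 - c) ^ ((1 - α) / α)) / 2) :=
        Real.log_le_log (by positivity) (by linarith)
      rw [Real.log_div hP.ne' two_ne_zero, Real.log_rpow h1] at hle
      refine le_trans (le_of_eq ?_) (mul_le_mul_of_nonneg_left hle hα0.le)
      field_simp
    · filter_upwards [self_mem_nhdsWithin] with α hα
      have hα0 : 0 < α := hα.1
      have hs : 0 ≤ (1 - α) / α := div_nonneg (by linarith [hα.2]) hα0.le
      have hP := Real.rpow_pos_of_pos h1 ((1 - α) / α)
      have hQ := Real.rpow_pos_of_pos h2 ((1 - α) / α)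
      have hQP : (1 - c) ^ ((1 - α) / α) ≤ (1 + c) ^ ((1 - α) / α) :=
        Real.rpow_le_rpow h2.le (by linarith) hs
      have hle : Real.log (((1 + c) ^ ((1 - α) / α) + (1 - c) ^ ((1 - α) / α)) / 2) ≤
          Real.log ((1 + c) ^ ((1 - α) / α)) :=
        Real.log_le_log (by positivity) (by linarith)
      rw [Real.log_rpow h1] at hle
      refine le_trans (mul_le_mul_of_nonneg_left hle hα0.le) (le_of_eq ?_)
      field_simp
  have hpre : Tendsto (fun α : ℝ => (α - 1)⁻¹)
      (nhdsWithin (0 : ℝ) (Set.Ioo (0 : ℝ) 1)) (nhds (-1)) := by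
    have : ContinuousAt (fun α : ℝ => (α - 1)⁻¹) 0 :=
      ContinuousAt.inv₀ (by fun_prop) (by norm_num)
    have h := this.tendsto.mono_left (nhdsWithin_le_nhds (s := Set.Ioo (0 : ℝ) 1))
    rwa [zero_sub, inv_neg, inv_one] at h
  have hmul := hpre.mul hlog
  rw [neg_one_mul] at hmul
  refine hmul.congr' ?_
  filter_upwards [self_mem_nhdsWithin] with α hα
  exact (renyiDiv_eq hc0 hc1 hα.1).symm

lemma relRenyi0_eq_zero (c : ℝ) :
    relRenyi0 !![1, 0; 0, 0] !![1, (c : ℂ); (c : ℂ), 1] = 0 := by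
  have hH : (!![1, 0; 0, 0] : Matrix (Fin 2) (Fin 2) ℂ).IsHermitian := by
    ext i j; fin_cases i <;> fin_cases j <;> simp
  rw [relRenyi0, suppProj, dif_pos hH, cfc_eq_affine hH _ 1 0 0 1]
  · simp [Matrix.trace, Fin.sum_univ_two]
  · ext i j
    fin_cases i <;> fin_cases j <;> simp [Matrix.mul_apply, Fin.sum_univ_two]
  · simp
  · simp

/-- `ρ` has the first coordinate axis as its support, while `σ` is invertible. -/
lemma msupp_lt {c : ℝ} (hc0 : 0 < c) (hc1 : c < 1) :
    msupp (!![1, 0; 0, 0] : Matrix (Fin 2) (Fin 2) ℂ) <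
      msupp !![1, (c : ℂ); (c : ℂ), 1] := by
  have hdet : (1 - (c : ℂ) * c) ≠ 0 := by
    have : (1 - c * c : ℝ) ≠ 0 := by nlinarith
    exact_mod_cast this
  have htop : msupp !![1, (c : ℂ); (c : ℂ), 1] = ⊤ := by
    rw [msupp, LinearMap.range_eq_top]
    rw [Matrix.coe_mulVecLin, Matrix.mulVec_surjective_iff_isUnit,
      Matrix.isUnit_iff_isUnit_det, Matrix.det_fin_two_of, isUnit_iff_ne_zero]
    simpa using hdet
  rw [htop, lt_top_iff_ne_top]
  intro h
  have hmem : (![0, 1] : Fin 2 → ℂ) ∈ msupp (!![1, 0; 0, 0] : Matrix (Fin 2) (Fin 2) ℂ) := by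
    rw [h]; trivial
  obtain ⟨w, hw⟩ := hmem
  have := congrFun hw 1
  simp [Matrix.mulVec, dotProduct, Fin.sum_univ_two] at this

/-- **Counterexample.** For `0 < c < 1`, `ρ = [[1,0],[0,0]]` and `σ = [[1,c],[c,1]]`, the
quantum Rényi divergence `D_α(ρ‖σ)` converges, as `α → 0` through `α ∈ (0,1)`, to
`- log (1+c) < 0`, which differs from `D̃₀(ρ‖σ) = 0`; in particular
`lim_{α→0} D_α(ρ‖σ) = D̃₀(ρ‖σ)` fails although `supp ρ` is strictly contained in `supp σ`. -/
theorem counterexample_limit (c : ℝ) (hc0 : 0 < c) (hc1 : c < 1)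
    (ρ σ : Matrix (Fin 2) (Fin 2) ℂ)
    (hρdef : ρ = !![1, 0; 0, 0]) (hσdef : σ = !![1, (c : ℂ); (c : ℂ), 1]) :
    msupp ρ < msupp σ ∧
      Filter.Tendsto (fun α : ℝ => renyiDiv ρ σ α) (nhdsWithin (0 : ℝ) (Set.Ioo (0 : ℝ) 1))
        (nhds (- Real.log (1 + c))) ∧
      - Real.log (1 + c) < 0 ∧ relRenyi0 ρ σ = 0 ∧ - Real.log (1 + c) ≠ relRenyi0 ρ σ ∧
      ¬ Filter.Tendsto (fun α : ℝ => renyiDiv ρ σ α) (nhdsWithin (0 : ℝ) (Set.Ioo (0 : ℝ) 1))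
        (nhds (relRenyi0 ρ σ)) := by
  subst hρdef hσdef
  have hneg : - Real.log (1 + c) < 0 := neg_lt_zero.2 (Real.log_pos (by linarith))
  have hlim := tendsto_renyiDiv hc0 hc1
  have hrel := relRenyi0_eq_zero c
  -- Uniqueness of limits below needs `0` to be a limit point of `(0, 1)`.
  have hne : (nhdsWithin (0 : ℝ) (Set.Ioo (0 : ℝ) 1)).NeBot :=
    left_nhdsWithin_Ioo_neBot one_pos
  refine ⟨msupp_lt hc0 hc1, hlim, hneg, hrel, by rw [hrel]; exact hneg.ne, fun h => ?_⟩
  rw [hrel] at h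
  exact hneg.ne (tendsto_nhds_unique hlim h)
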